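/- arXiv:1507.04032 — 2 statements merged into one kernel-verified Lean document; each statement's English description precedes it below -/
import Mathlib

section
/- Let W be a matrix A_p weight, 1 < p < ∞, and for cubes I ⊆ Ĩ with comparable side lengths let V_I, V_Ĩ, V_I', V_Ĩ' be reducing operators as above. Then for all e ∈ ℂⁿ: |V_Ĩ e|^p ≲ ‖W‖_{A_p} |V_I e|^p, where the implied constant depends only on n, p and the side-length ratio. That is, the reducing operator of the larger cube is dominated by that of the smaller cube up to the A_p characteristic. -/
open MeasureTheory Matrix
open scoped ComplexOrder

/-- The operator norm on `n × n` complex matrices induced by the Euclidean norm. -/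
noncomputable def matNorm {n : ℕ} (M : Matrix (Fin n) (Fin n) ℂ) : ℝ :=
  ‖(Matrix.toEuclideanCLM (𝕜 := ℂ) M : EuclideanSpace ℂ (Fin n) →L[ℂ] EuclideanSpace ℂ (Fin n))‖

/-- The Euclidean norm of a vector in `ℂⁿ`. -/
noncomputable def vecNorm {n : ℕ} (v : Fin n → ℂ) : ℝ :=
  ‖(WithLp.equiv 2 (Fin n → ℂ)).symm v‖

/-- A (half-open, axis-parallel) cube in `ℝ^d`. -/
def IsCube {d : ℕ} (I : Set (Fin d → ℝ)) : Prop :=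
  ∃ (a : Fin d → ℝ) (ℓ : ℝ), 0 < ℓ ∧ I = Set.univ.pi fun i => Set.Ico (a i) (a i + ℓ)

/-- The average `(1/|I|) ∫_I g` of a scalar function over a set `I`. -/
noncomputable def avg {d : ℕ} (I : Set (Fin d → ℝ)) (g : (Fin d → ℝ) → ℝ) : ℝ :=
  (volume I).toReal⁻¹ * ∫ x in I, g x

/-- The (entrywise) average of a vector-valued function over a set `I`. -/
noncomputable def vavg {d n : ℕ} (I : Set (Fin d → ℝ)) (f : (Fin d → ℝ) → Fin n → ℂ) :
    Fin n → ℂ :=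
  fun i => (volume I).toReal⁻¹ • (∫ x in I, f x i)

/-- The (entrywise) average of a matrix-valued function over a set `I`. -/
noncomputable def mavg {d n : ℕ} (I : Set (Fin d → ℝ))
    (F : (Fin d → ℝ) → Matrix (Fin n) (Fin n) ℂ) : Matrix (Fin n) (Fin n) ℂ :=
  Matrix.of fun i j => (volume I).toReal⁻¹ • (∫ x in I, F x i j)


lemma vecNorm_mulVec_le {n : ℕ} (M : Matrix (Fin n) (Fin n) ℂ) (e : Fin n → ℂ) :
    vecNorm (M.mulVec e) ≤ matNorm M * vecNorm e := by
  have := (Matrix.toEuclideanCLM (𝕜 := ℂ) M).le_opNorm (WithLp.toLp 2 e)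
  simpa [vecNorm, matNorm] using this

lemma matNorm_le_of {n : ℕ} (M : Matrix (Fin n) (Fin n) ℂ) (s : ℝ) (hs : 0 ≤ s)
    (h : ∀ e, vecNorm (M.mulVec e) ≤ s * vecNorm e) : matNorm M ≤ s := by
  refine ContinuousLinearMap.opNorm_le_bound _ hs fun v => ?_
  exact h (WithLp.ofLp v)

lemma vecNorm_nonneg {n : ℕ} (v : Fin n → ℂ) : 0 ≤ vecNorm v := norm_nonneg _

lemma matNorm_nonneg {n : ℕ} (M : Matrix (Fin n) (Fin n) ℂ) : 0 ≤ matNorm M := norm_nonneg _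

lemma matNorm_mul_le {n : ℕ} (A B : Matrix (Fin n) (Fin n) ℂ) :
    matNorm (A * B) ≤ matNorm A * matNorm B := by
  refine matNorm_le_of _ _ (mul_nonneg (matNorm_nonneg _) (matNorm_nonneg _)) fun e => ?_
  rw [← Matrix.mulVec_mulVec, mul_assoc]
  exact (vecNorm_mulVec_le _ _).trans
    (mul_le_mul_of_nonneg_left (vecNorm_mulVec_le _ _) (matNorm_nonneg _))

lemma continuous_vecNorm {n : ℕ} : Continuous (vecNorm (n := n)) := by
  unfold vecNorm
  exact (PiLp.continuous_toLp 2 _).norm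

lemma continuous_vecNorm_mulVec {n : ℕ} (M : Matrix (Fin n) (Fin n) ℂ) :
    Continuous fun e => vecNorm (M.mulVec e) :=
  continuous_vecNorm.comp (Continuous.matrix_mulVec continuous_const continuous_id)

lemma matNorm_le_sum {n : ℕ} (M : Matrix (Fin n) (Fin n) ℂ) :
    matNorm M ≤ ∑ i, vecNorm (M.mulVec (Pi.single i 1)) := by
  refine matNorm_le_of _ _ (Finset.sum_nonneg fun i _ => vecNorm_nonneg _) fun e => ?_
  have h1 : M.mulVec e = ∑ i, e i • M.mulVec (Pi.single i 1) := by
    ext j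
    simp [Matrix.mulVec, dotProduct, Finset.sum_apply, mul_comm]
  have h2 : vecNorm (M.mulVec e) ≤ ∑ i, ‖e i‖ * vecNorm (M.mulVec (Pi.single i 1)) := by
    rw [h1]
    unfold vecNorm
    simp only [WithLp.equiv_symm_apply, WithLp.toLp_sum, WithLp.toLp_smul]
    refine (norm_sum_le _ _).trans (Finset.sum_le_sum fun i _ => ?_)
    rw [norm_smul]
  refine h2.trans ?_
  rw [Finset.sum_mul]
  refine Finset.sum_le_sum fun i _ => ?_
  rw [mul_comm]
  refine mul_le_mul_of_nonneg_left ?_ (vecNorm_nonneg _)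
  exact PiLp.norm_apply_le (WithLp.toLp 2 e) i

lemma vecNorm_mulVec_le_inv {n : ℕ} (A B : Matrix (Fin n) (Fin n) ℂ) (hB : B.PosDef)
    (e : Fin n → ℂ) : vecNorm (A.mulVec e) ≤ matNorm (A * B⁻¹) * vecNorm (B.mulVec e) := by
  have h := vecNorm_mulVec_le (A * B⁻¹) (B.mulVec e)
  have hu : IsUnit B.det := (Matrix.isUnit_iff_isUnit_det _).1 hB.isUnit
  rwa [Matrix.mulVec_mulVec, mul_assoc, Matrix.nonsing_inv_mul _ hu, mul_one] at h

lemma vecNorm_pos_of {n : ℕ} (B : Matrix (Fin n) (Fin n) ℂ) (hB : B.PosDef)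
    (e : Fin n → ℂ) (h : vecNorm (B.mulVec e) = 0) : e = 0 := by
  have hu : IsUnit B.det := (Matrix.isUnit_iff_isUnit_det _).1 hB.isUnit
  have h0 : B.mulVec e = 0 := by simpa [vecNorm] using h
  have : B⁻¹.mulVec (B.mulVec e) = e := by
    rw [Matrix.mulVec_mulVec, Matrix.nonsing_inv_mul _ hu, Matrix.one_mulVec]
  rw [← this, h0, Matrix.mulVec_zero]

lemma bdd_ratio {n : ℕ} (A B : Matrix (Fin n) (Fin n) ℂ) (hB : B.PosDef) (u : Fin n → ℂ) :
    vecNorm (A.mulVec u) / vecNorm (B.mulVec u) ≤ matNorm (A * B⁻¹) :=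
  div_le_of_le_mul₀ (vecNorm_nonneg _) (matNorm_nonneg _) (vecNorm_mulVec_le_inv A B hB u)

lemma bddAbove_ratio {n : ℕ} (A B : Matrix (Fin n) (Fin n) ℂ) (hB : B.PosDef)  :
    BddAbove (Set.range fun k : ℕ => vecNorm (A.mulVec (TopologicalSpace.denseSeq _ k)) /
      vecNorm (B.mulVec (TopologicalSpace.denseSeq _ k))) := by
  refine ⟨matNorm (A * B⁻¹), ?_⟩
  rintro _ ⟨k, rfl⟩
  exact bdd_ratio A B hB _

lemma matNorm_eq_iSup {n : ℕ} (A B : Matrix (Fin n) (Fin n) ℂ) (hB : B.PosDef) :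
    matNorm (A * B⁻¹) = ⨆ k : ℕ, vecNorm (A.mulVec (TopologicalSpace.denseSeq _ k)) /
      vecNorm (B.mulVec (TopologicalSpace.denseSeq _ k)) := by
  have hu : IsUnit B.det := (Matrix.isUnit_iff_isUnit_det _).1 hB.isUnit
  apply le_antisymm
  · set s := ⨆ k : ℕ, vecNorm (A.mulVec (TopologicalSpace.denseSeq _ k)) /
      vecNorm (B.mulVec (TopologicalSpace.denseSeq _ k)) with hs
    have hs0 : 0 ≤ s := Real.iSup_nonneg fun k => div_nonneg (vecNorm_nonneg _) (vecNorm_nonneg _)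
    have key : ∀ u : Fin n → ℂ, vecNorm (A.mulVec u) ≤ s * vecNorm (B.mulVec u) := by
      intro u
      have hcl : IsClosed {u : Fin n → ℂ | vecNorm (A.mulVec u) ≤ s * vecNorm (B.mulVec u)} :=
        isClosed_le (continuous_vecNorm_mulVec A)
          (continuous_const.mul (continuous_vecNorm_mulVec B))
      have hd := TopologicalSpace.denseRange_denseSeq (Fin n → ℂ)
      refine hd.induction_on (p := fun u => vecNorm (A.mulVec u) ≤ s * vecNorm (B.mulVec u))
        u hcl fun k => ?_
      rcases (vecNorm_nonneg (B.mulVec (TopologicalSpace.denseSeq (Fin n → ℂ) k))).eq_or_lt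
        with h0 | h0
      · rw [vecNorm_pos_of B hB _ h0.symm]
        simp [vecNorm]
      · rw [← div_le_iff₀ h0]
        exact le_ciSup (bddAbove_ratio A B hB) k
    refine matNorm_le_of _ _ hs0 fun e => ?_
    have := key (B⁻¹.mulVec e)
    rwa [Matrix.mulVec_mulVec, Matrix.mulVec_mulVec, Matrix.mul_nonsing_inv _ hu,
      Matrix.one_mulVec] at this
  · exact ciSup_le fun k => bdd_ratio A B hB _

lemma cube_facts {d : ℕ} {I : Set (Fin d → ℝ)} (h : IsCube I) :
    MeasurableSet I ∧ volume I ≠ ⊤ ∧ 0 < (volume I).toReal := by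
  obtain ⟨a, l, hl, rfl⟩ := h
  have hv : volume (Set.univ.pi fun i => Set.Ico (a i) (a i + l)) = ENNReal.ofReal (l ^ d) := by
    rw [volume_pi_pi]
    simp [ENNReal.ofReal_pow hl.le]
  refine ⟨MeasurableSet.univ_pi fun i => measurableSet_Ico, ?_, ?_⟩
  · rw [hv]; exact ENNReal.ofReal_ne_top
  · rw [hv, ENNReal.toReal_ofReal (by positivity)]; positivity

lemma matNorm_rpow_dom {α : Type*} [MeasurableSpace α] {n : ℕ} (μ : Measure α)
    (W : α → Matrix (Fin n) (Fin n) ℂ) (q : ℝ) (hq : 1 ≤ q)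
    (h : ∀ e, Integrable (fun x => vecNorm ((W x).mulVec e) ^ q) μ) :
    ∃ g : α → ℝ, Integrable g μ ∧ ∀ x, matNorm (W x) ^ q ≤ g x := by
  refine ⟨fun x => (Finset.univ : Finset (Fin n)).card ^ (q - 1) *
    ∑ i, vecNorm ((W x).mulVec (Pi.single i 1)) ^ q, ?_, fun x => ?_⟩
  · exact (integrable_finsetSum _ fun i _ => h _).const_mul _
  · refine (Real.rpow_le_rpow (matNorm_nonneg _) (matNorm_le_sum _) (by linarith)).trans ?_
    exact Real.rpow_sum_le_const_mul_sum_rpow_of_nonneg _ hq fun i _ => vecNorm_nonneg _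

lemma aemeas_of_rpow {α : Type*} [MeasurableSpace α] {μ : Measure α} {f : α → ℝ} {p : ℝ}
    (hp : 0 < p) (hf : ∀ x, 0 ≤ f x) (h : Integrable (fun x => f x ^ p) μ) : AEMeasurable f μ := by
  refine (h.aemeasurable.pow_const (1 / p)).congr (Filter.Eventually.of_forall fun x => ?_)
  simp only
  rw [← Real.rpow_mul (hf x), mul_one_div_cancel hp.ne', Real.rpow_one]

lemma avg_nonneg {d : ℕ} (I : Set (Fin d → ℝ)) (g : (Fin d → ℝ) → ℝ) (hg : ∀ x, 0 ≤ g x) :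
    0 ≤ avg I g :=
  mul_nonneg (by positivity) (integral_nonneg hg)

lemma avg_holder {d : ℕ} {I : Set (Fin d → ℝ)} (hI : IsCube I) {p q : ℝ}
    (hpq : p.HolderConjugate q) (f g : (Fin d → ℝ) → ℝ) (hf : ∀ x, 0 ≤ f x) (hg : ∀ x, 0 ≤ g x)
    (hfi : IntegrableOn (fun x => f x ^ p) I) (hgi : IntegrableOn (fun x => g x ^ q) I)
    (a : ℝ) (ha : ∀ x, a ≤ f x * g x) :
    a ≤ (avg I fun x => f x ^ p) ^ (1 / p) * (avg I fun x => g x ^ q) ^ (1 / q) := by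
  obtain ⟨hm, hfin, hpos⟩ := cube_facts hI
  have hp := hpq.pos
  have hq := hpq.symm.pos
  have memF : MemLp f (ENNReal.ofReal p) (volume.restrict I) := by
    rw [← integrable_norm_rpow_iff (aemeas_of_rpow hp hf hfi).aestronglyMeasurable
      (by simpa using hp) (by simp), ENNReal.toReal_ofReal hp.le]
    refine hfi.congr (Filter.Eventually.of_forall fun x => ?_)
    simp [abs_of_nonneg (hf x)]
  have memG : MemLp g (ENNReal.ofReal q) (volume.restrict I) := by
    rw [← integrable_norm_rpow_iff (aemeas_of_rpow hq hg hgi).aestronglyMeasurable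
      (by simpa using hq) (by simp), ENNReal.toReal_ofReal hq.le]
    refine hgi.congr (Filter.Eventually.of_forall fun x => ?_)
    simp [abs_of_nonneg (hg x)]
  have hol := integral_mul_le_Lp_mul_Lq_of_nonneg hpq (Filter.Eventually.of_forall hf)
    (Filter.Eventually.of_forall hg) memF memG
  have : (ENNReal.ofReal p).HolderTriple (ENNReal.ofReal q) 1 := by
    have := hpq.ennrealOfReal
    exact this
  have hint : Integrable (f * g) (volume.restrict I) := memF.integrable_mul memG
  have h1 : (volume I).toReal * a ≤ ∫ x in I, f x * g x := by
    have : ∫ x in I, a = (volume I).toReal * a := by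
      simp [Measure.real]
    rw [← this]
    refine integral_mono (integrableOn_const hfin) hint fun x => ha x
  unfold avg
  rw [Real.mul_rpow (by positivity) (integral_nonneg fun x => Real.rpow_nonneg (hf x) _),
    Real.mul_rpow (by positivity) (integral_nonneg fun x => Real.rpow_nonneg (hg x) _)]
  have h2 : ((volume I).toReal⁻¹) ^ (1 / p) * ((volume I).toReal⁻¹) ^ (1 / q)
      = (volume I).toReal⁻¹ := by
    rw [← Real.rpow_add (by positivity)]
    have := hpq.inv_add_inv_eq_one
    rw [one_div, one_div, this, Real.rpow_one]
  rw [mul_mul_mul_comm, h2]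
  rw [← div_eq_inv_mul, le_div_iff₀ hpos, mul_comm]
  exact h1.trans hol

lemma avg_mono_set {d : ℕ} {I J : Set (Fin d → ℝ)} (hI : IsCube I) (hJ : IsCube J) (hIJ : I ⊆ J)
    {C : ℝ} (hC : 0 < C) (hv : volume J ≤ ENNReal.ofReal C * volume I)
    (g : (Fin d → ℝ) → ℝ) (hg : ∀ x, 0 ≤ g x) (hgi : IntegrableOn g J) :
    avg I g ≤ C * avg J g := by
  obtain ⟨hm, hfin, hpos⟩ := cube_facts hI
  obtain ⟨hm', hfin', hpos'⟩ := cube_facts hJ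
  have h1 : ∫ x in I, g x ≤ ∫ x in J, g x :=
    setIntegral_mono_set hgi (Filter.Eventually.of_forall hg) (Filter.Eventually.of_forall hIJ)
  have h2 : (volume J).toReal ≤ C * (volume I).toReal := by
    have := ENNReal.toReal_mono (ENNReal.mul_ne_top ENNReal.ofReal_ne_top hfin) hv
    rwa [ENNReal.toReal_mul, ENNReal.toReal_ofReal hC.le] at this
  have h3 : (volume I).toReal⁻¹ ≤ C * (volume J).toReal⁻¹ := by
    rw [← div_eq_mul_inv, le_div_iff₀ hpos', inv_mul_le_iff₀ hpos]
    linarith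
  unfold avg
  rw [← mul_assoc]
  exact mul_le_mul h3 h1 (integral_nonneg hg) (by positivity)

/-- If `W` is a matrix `A_p` weight (characteristic at most `Cw`) and `I ⊆ Ĩ` are cubes with
`|Ĩ| ≤ C |I|`, then `|V_Ĩ e|^p ≲ Cw |V_I e|^p` for all `e`, with implied constant depending
only on `n`, `p` and the size ratio `C`.  Here `Wp = W^{1/p}`, `Wm = Wp⁻¹ = W^{-1/p}`, and
`VI, VI', VItil, VItil'` are reducing operators for `ρ_{W,I,p}`, `ρ*_{W,I,p}`,
`ρ_{W,Ĩ,p}`, `ρ*_{W,Ĩ,p}` respectively. -/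
theorem stmt7 {d n : ℕ} (p p' C : ℝ) (hp : 1 < p) (hpp' : 1 / p + 1 / p' = 1) (hC : 0 < C) :
    ∃ c : ℝ, 0 < c ∧
      ∀ (Wp Wm : (Fin d → ℝ) → Matrix (Fin n) (Fin n) ℂ),
        (∀ x, (Wp x).PosDef) → (∀ x, Wm x = (Wp x)⁻¹) →
      ∀ Cw : ℝ, 1 ≤ Cw →
      (∀ J : Set (Fin d → ℝ), IsCube J →
        avg J (fun x => (avg J fun t => matNorm (Wp x * Wm t) ^ p') ^ (p / p')) ≤ Cw) →
      ∀ (I Itil : Set (Fin d → ℝ)), IsCube I → IsCube Itil → I ⊆ Itil →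
        volume Itil ≤ ENNReal.ofReal C * volume I →
      (∀ J : Set (Fin d → ℝ), IsCube J →
        ∀ e : Fin n → ℂ, IntegrableOn (fun x => vecNorm ((Wp x).mulVec e) ^ p) J volume) →
      (∀ J : Set (Fin d → ℝ), IsCube J →
        ∀ e : Fin n → ℂ, IntegrableOn (fun x => vecNorm ((Wm x).mulVec e) ^ p') J volume) →
      ∀ (VI VI' VItil VItil' : Matrix (Fin n) (Fin n) ℂ),
        VI.PosDef → VI'.PosDef → VItil.PosDef → VItil'.PosDef →
      (∀ e : Fin n → ℂ,
        (avg I fun x => vecNorm ((Wp x).mulVec e) ^ p) ^ (1 / p) ≤ vecNorm (VI.mulVec e) ∧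
        vecNorm (VI.mulVec e)
          ≤ Real.sqrt n * (avg I fun x => vecNorm ((Wp x).mulVec e) ^ p) ^ (1 / p)) →
      (∀ e : Fin n → ℂ,
        (avg I fun x => vecNorm ((Wm x).mulVec e) ^ p') ^ (1 / p') ≤ vecNorm (VI'.mulVec e) ∧
        vecNorm (VI'.mulVec e)
          ≤ Real.sqrt n * (avg I fun x => vecNorm ((Wm x).mulVec e) ^ p') ^ (1 / p')) →
      (∀ e : Fin n → ℂ,
        (avg Itil fun x => vecNorm ((Wp x).mulVec e) ^ p) ^ (1 / p)
          ≤ vecNorm (VItil.mulVec e) ∧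
        vecNorm (VItil.mulVec e)
          ≤ Real.sqrt n * (avg Itil fun x => vecNorm ((Wp x).mulVec e) ^ p) ^ (1 / p)) →
      (∀ e : Fin n → ℂ,
        (avg Itil fun x => vecNorm ((Wm x).mulVec e) ^ p') ^ (1 / p')
          ≤ vecNorm (VItil'.mulVec e) ∧
        vecNorm (VItil'.mulVec e)
          ≤ Real.sqrt n * (avg Itil fun x => vecNorm ((Wm x).mulVec e) ^ p') ^ (1 / p')) →
      ∀ e : Fin n → ℂ,
        vecNorm (VItil.mulVec e) ^ p ≤ c * Cw * vecNorm (VI.mulVec e) ^ p := by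
  have hp0 : 0 < p := by linarith
  have hpq : p.HolderConjugate p' := by
    rw [Real.holderConjugate_iff]
    exact ⟨hp, by simpa using hpp'⟩
  have hq : 1 < p' := hpq.symm.lt
  have hq0 : 0 < p' := by linarith
  refine ⟨(Real.sqrt n) ^ p * C ^ (p / p') + 1, by positivity, ?_⟩
  intro Wp Wm hWp hWm Cw hCw hAp I Itil hI hItil hsub hvol hintp hintm VI VI' VItil VItil'
    _ _ _ _ hVI _ hVItil _ e
  have hap : ∀ e x, 0 ≤ vecNorm ((Wp x).mulVec e) := fun e x => vecNorm_nonneg _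
  have hmeas : ∀ e, AEMeasurable (fun x => vecNorm ((Wp x).mulVec e)) (volume.restrict Itil) :=
    fun e => aemeas_of_rpow hp0 (hap e) (hintp Itil hItil e)
  have hKeq : ∀ x t, matNorm (Wp x * Wm t) =
      ⨆ k : ℕ, vecNorm ((Wp x).mulVec (TopologicalSpace.denseSeq _ k)) /
        vecNorm ((Wp t).mulVec (TopologicalSpace.denseSeq _ k)) := by
    intro x t
    rw [hWm t]
    exact matNorm_eq_iSup _ _ (hWp t)
  have hKx : ∀ x, AEMeasurable (fun t => matNorm (Wp x * Wm t)) (volume.restrict Itil) := by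
    intro x
    simp only [hKeq]
    exact AEMeasurable.iSup fun k => aemeasurable_const.div (hmeas _)
  have hK : AEMeasurable (fun z : (Fin d → ℝ) × (Fin d → ℝ) => matNorm (Wp z.1 * Wm z.2))
      ((volume.restrict Itil).prod (volume.restrict Itil)) := by
    simp only [hKeq]
    exact AEMeasurable.iSup fun k => (hmeas _).comp_fst.div (hmeas _).comp_snd
  obtain ⟨gp, hgpi, hgp⟩ := matNorm_rpow_dom (volume.restrict Itil) Wp p hp.le (hintp Itil hItil)
  obtain ⟨gm, hgmi, hgm⟩ := matNorm_rpow_dom (volume.restrict Itil) Wm p' hq.le (hintm Itil hItil)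
  have hKb : ∀ x t, matNorm (Wp x * Wm t) ^ p' ≤ matNorm (Wp x) ^ p' * gm t := by
    intro x t
    refine (Real.rpow_le_rpow (matNorm_nonneg _) (matNorm_mul_le _ _) hq0.le).trans ?_
    rw [Real.mul_rpow (matNorm_nonneg _) (matNorm_nonneg _)]
    exact mul_le_mul_of_nonneg_left (hgm t) (Real.rpow_nonneg (matNorm_nonneg _) _)
  have hK0 : ∀ x t, 0 ≤ matNorm (Wp x * Wm t) ^ p' :=
    fun x t => Real.rpow_nonneg (matNorm_nonneg _) _
  have hKi : ∀ x, IntegrableOn (fun t => matNorm (Wp x * Wm t) ^ p') Itil := by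
    intro x
    refine Integrable.mono' (hgmi.const_mul (matNorm (Wp x) ^ p'))
      ((hKx x).pow_const p').aestronglyMeasurable (Filter.Eventually.of_forall fun t => ?_)
    rw [Real.norm_of_nonneg (hK0 x t)]
    exact hKb x t
  set F : (Fin d → ℝ) → ℝ :=
    fun x => (avg Itil fun t => matNorm (Wp x * Wm t) ^ p') ^ (p / p') with hF
  have hF0 : ∀ x, 0 ≤ F x := fun x => Real.rpow_nonneg (avg_nonneg _ _ (hK0 x)) _
  have hgm0 : ∀ t, 0 ≤ gm t := fun t => (Real.rpow_nonneg (matNorm_nonneg _) _).trans (hgm t)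
  have hB0 : 0 ≤ avg Itil gm := avg_nonneg _ _ hgm0
  have hFi : IntegrableOn F Itil := by
    refine Integrable.mono' (hgpi.mul_const (avg Itil gm ^ (p / p'))) ?_
      (Filter.Eventually.of_forall fun x => ?_)
    · have h1 := (hK.pow_const p').aestronglyMeasurable.integral_prod_right'
      exact ((h1.aemeasurable.const_mul _).pow_const _).aestronglyMeasurable
    · rw [Real.norm_of_nonneg (hF0 x)]
      have h1 : (avg Itil fun t => matNorm (Wp x * Wm t) ^ p')
          ≤ matNorm (Wp x) ^ p' * avg Itil gm := by
        unfold avg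
        rw [mul_left_comm, ← integral_const_mul (matNorm (Wp x) ^ p')]
        exact mul_le_mul_of_nonneg_left (integral_mono (hKi x) (hgmi.const_mul _) (hKb x))
          (by positivity)
      refine (Real.rpow_le_rpow (avg_nonneg _ _ (hK0 x)) h1 (by positivity)).trans ?_
      rw [Real.mul_rpow (Real.rpow_nonneg (matNorm_nonneg _) _) hB0,
        ← Real.rpow_mul (matNorm_nonneg _), mul_div_cancel₀ _ hq0.ne']
      exact mul_le_mul_of_nonneg_right (hgp x) (Real.rpow_nonneg hB0 _)
  have hpt : ∀ x, vecNorm ((Wp x).mulVec e) ^ p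
      ≤ F x * (C ^ (p / p') * vecNorm (VI.mulVec e) ^ p) := by
    intro x
    have h1 := avg_holder hI hpq.symm (fun t => matNorm (Wp x * Wm t))
      (fun t => vecNorm ((Wp t).mulVec e)) (fun t => matNorm_nonneg _) (hap e)
      ((hKi x).mono_set hsub) (hintp I hI e) (vecNorm ((Wp x).mulVec e))
      (fun t => by rw [hWm t]; exact vecNorm_mulVec_le_inv _ _ (hWp t) e)
    have h2 := avg_mono_set hI hItil hsub hC hvol _ (hK0 x) (hKi x)
    have hA0 := avg_nonneg Itil _ (hK0 x)
    have h3 : vecNorm ((Wp x).mulVec e) ≤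
        (C * avg Itil fun t => matNorm (Wp x * Wm t) ^ p') ^ (1 / p') * vecNorm (VI.mulVec e) :=
      h1.trans (mul_le_mul (Real.rpow_le_rpow (avg_nonneg _ _ (hK0 x)) h2 (by positivity))
        (hVI e).1 (Real.rpow_nonneg (avg_nonneg _ _ fun t => Real.rpow_nonneg (hap e t) _) _)
        (by positivity))
    refine (Real.rpow_le_rpow (hap e x) h3 hp0.le).trans (le_of_eq ?_)
    rw [Real.mul_rpow (by positivity) (vecNorm_nonneg _), ← Real.rpow_mul (by positivity),
      Real.mul_rpow hC.le hA0, one_div_mul_eq_div]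
    simp only [hF]
    ring
  have hV0 : 0 ≤ vecNorm (VI.mulVec e) ^ p := Real.rpow_nonneg (vecNorm_nonneg _) _
  have havg : (avg Itil fun x => vecNorm ((Wp x).mulVec e) ^ p)
      ≤ Cw * (C ^ (p / p') * vecNorm (VI.mulVec e) ^ p) := by
    refine le_trans ?_ (mul_le_mul_of_nonneg_right (hAp Itil hItil) (by positivity))
    unfold avg
    rw [mul_assoc, ← integral_mul_const]
    exact mul_le_mul_of_nonneg_left
      (integral_mono (hintp Itil hItil e) (hFi.mul_const _) hpt) (by positivity)
  have hav0 : 0 ≤ avg Itil fun x => vecNorm ((Wp x).mulVec e) ^ p :=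
    avg_nonneg _ _ fun t => Real.rpow_nonneg (hap e t) _
  have hfin := Real.rpow_le_rpow (vecNorm_nonneg _) (hVItil e).2 hp0.le
  rw [Real.mul_rpow (Real.sqrt_nonneg _) (by positivity), ← Real.rpow_mul hav0,
    one_div_mul_cancel hp0.ne', Real.rpow_one] at hfin
  refine hfin.trans ((mul_le_mul_of_nonneg_left havg (by positivity)).trans ?_)
  have : 0 ≤ Cw * vecNorm (VI.mulVec e) ^ p := by positivity
  nlinarith
end

section
/- (Decaying stopping time) Let 1 < p < ∞ and W a matrix A_p weight on ℝ^d with reducing operators V_I. For a dyadic cube I and parameters λ₁, λ₂ > 1, let J(I) be the maximal dyadic subcubes J of I with ‖V_J V_I^{-1}‖^p > λ₁ or ‖V_J^{-1} V_I‖^{p'} > λ₂, and define J^j(I) iteratively. Then there exist λ₁ ≈ 1 (depending only on n, d) and λ₂ ≈ ‖W‖_{A_p}^{p'/p} such that |⋃ J^j(I)| ≤ 2^{-j}|I| for every dyadic cube I and every j ≥ 0. -/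
open MeasureTheory Matrix
open scoped ComplexOrder

/-- The dyadic cube of generation `k` indexed by `m ∈ ℤ^d`. -/
def dCube (d : ℕ) (I : ℤ × (Fin d → ℤ)) : Set (Fin d → ℝ) :=
  Set.univ.pi fun i =>
    Set.Ico ((I.2 i : ℝ) * (2 : ℝ) ^ (-I.1)) (((I.2 i : ℝ) + 1) * (2 : ℝ) ^ (-I.1))

/-- `J` is a "stopping" cube for `I`: `‖V_J V_I⁻¹‖^p > λ₁` or `‖V_J⁻¹ V_I‖^{p'} > λ₂`. -/
def Bad {d n : ℕ} (p p' lam1 lam2 : ℝ)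
    (V : ℤ × (Fin d → ℤ) → Matrix (Fin n) (Fin n) ℂ) (I J : ℤ × (Fin d → ℤ)) : Prop :=
  lam1 < matNorm (V J * (V I)⁻¹) ^ p ∨ lam2 < matNorm ((V J)⁻¹ * V I) ^ p'

/-- `J` is a maximal stopping subcube of `I`. -/
def MaxBad {d n : ℕ} (p p' lam1 lam2 : ℝ)
    (V : ℤ × (Fin d → ℤ) → Matrix (Fin n) (Fin n) ℂ) (I J : ℤ × (Fin d → ℤ)) : Prop :=
  dCube d J ⊆ dCube d I ∧ Bad p p' lam1 lam2 V I J ∧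
    ∀ K : ℤ × (Fin d → ℤ), dCube d J ⊆ dCube d K → dCube d K ⊆ dCube d I →
      Bad p p' lam1 lam2 V I K → dCube d K = dCube d J

/-- The iterated stopping families `J^j(I)`: `J^0(I) = {I}` and
`J^{j+1}(I) = ⋃_{K ∈ J^j(I)} {maximal stopping subcubes of K}`. -/
def StopFam {d n : ℕ} (p p' lam1 lam2 : ℝ)
    (V : ℤ × (Fin d → ℤ) → Matrix (Fin n) (Fin n) ℂ) :
    ℕ → ℤ × (Fin d → ℤ) → Set (ℤ × (Fin d → ℤ))
  | 0, I => {I}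
  | (j + 1), I => ⋃ K ∈ StopFam p p' lam1 lam2 V j I, {J | MaxBad p p' lam1 lam2 V K J}

/-! ### Operators on Euclidean space -/

/-- Local abbreviation for Euclidean space. -/
abbrev EE (n : ℕ) := EuclideanSpace ℂ (Fin n)

/-- Standard basis vectors. -/
noncomputable def bb (n : ℕ) (i : Fin n) : EE n := EuclideanSpace.single i (1 : ℂ)

lemma opnorm_le_sum {n : ℕ} (T : EE n →L[ℂ] EE n) : ‖T‖ ≤ ∑ i, ‖T (bb n i)‖ := by
  refine T.opNorm_le_bound (Finset.sum_nonneg fun _ _ => norm_nonneg _) fun x => ?_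
  have hx : x = ∑ i, x i • bb n i := by
    have := (EuclideanSpace.basisFun (Fin n) ℂ).sum_repr x
    simpa [bb] using this.symm
  calc ‖T x‖ = ‖∑ i, x i • T (bb n i)‖ := by
        conv_lhs => rw [hx]
        simp [map_sum]
    _ ≤ ∑ i, ‖x i • T (bb n i)‖ := norm_sum_le _ _
    _ ≤ ∑ i, ‖T (bb n i)‖ * ‖x‖ := by
        refine Finset.sum_le_sum fun i _ => ?_
        rw [norm_smul, mul_comm]
        gcongr
        exact PiLp.norm_apply_le x i
    _ = _ := by rw [Finset.sum_mul]

lemma opnorm_rpow_le {n : ℕ} (T : EE n →L[ℂ] EE n) {q : ℝ} (hq : 0 < q) :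
    ‖T‖ ^ q ≤ (n : ℝ) ^ q * ∑ i, ‖T (bb n i)‖ ^ q := by
  set S := ∑ i, ‖T (bb n i)‖ ^ q with hS
  have hS0 : 0 ≤ S := Finset.sum_nonneg fun _ _ => by positivity
  have h1 : ∀ i, ‖T (bb n i)‖ ≤ S ^ (1 / q) := by
    intro i
    have : ‖T (bb n i)‖ ^ q ≤ S :=
      Finset.single_le_sum (f := fun i => ‖T (bb n i)‖ ^ q)
        (fun _ _ => by positivity) (Finset.mem_univ i)
    calc ‖T (bb n i)‖ = (‖T (bb n i)‖ ^ q) ^ (1 / q) := by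
          rw [← Real.rpow_mul (norm_nonneg _)]; field_simp; simp
      _ ≤ _ := by gcongr
  have h2 : ‖T‖ ≤ n * S ^ (1 / q) := by
    refine (opnorm_le_sum T).trans ((Finset.sum_le_sum fun i _ => h1 i).trans ?_)
    simp
  calc ‖T‖ ^ q ≤ (n * S ^ (1 / q)) ^ q := by gcongr
    _ = n ^ q * S := by
        rw [Real.mul_rpow (by positivity) (by positivity), ← Real.rpow_mul hS0]
        field_simp; simp

lemma clm_aesm {n : ℕ} {X : Type*} [MeasurableSpace X] {μ : Measure X}
    {S : X → (EE n →L[ℂ] EE n)}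
    (h : ∀ e f : EE n, AEStronglyMeasurable (fun x => inner ℂ e (S x f)) μ) :
    AEStronglyMeasurable S μ := by
  have key : S = fun x => ∑ j, ∑ i, (inner ℂ (bb n i) (S x (bb n j))) •
      ((InnerProductSpace.toDual ℂ (EE n) (bb n j)).smulRight (bb n i)) := by
    funext x
    ext y k
    have hy : y = ∑ i, y i • bb n i := by
      have := (EuclideanSpace.basisFun (Fin n) ℂ).sum_repr y
      simpa [bb] using this.symm
    conv_lhs => rw [hy]
    simp [map_sum, bb, EuclideanSpace.inner_single_left, Pi.single_apply, mul_comm]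
  rw [key]
  refine Finset.aestronglyMeasurable_fun_sum _ fun j _ => ?_
  refine Finset.aestronglyMeasurable_fun_sum _ fun i _ => ?_
  exact (h _ _).smul_const _

lemma inner_meas {n : ℕ} {X : Type*} [MeasurableSpace X] {μ : Measure X}
    {A : X → (EE n →L[ℂ] EE n)}
    (h : ∀ e : EE n, AEStronglyMeasurable (fun x => ‖A x e‖) μ) (e f : EE n) :
    AEStronglyMeasurable (fun x => inner ℂ (A x e) (A x f)) μ := by
  have h' : ∀ e : EE n, AEStronglyMeasurable (fun x => (‖A x e‖ : ℂ)) μ := fun e =>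
    Complex.continuous_ofReal.comp_aestronglyMeasurable (h e)
  have : (fun x => inner ℂ (A x e) (A x f)) = fun x =>
      ((‖A x (e + f)‖ : ℂ) ^ 2 - (‖A x (e - f)‖ : ℂ) ^ 2 +
        ((‖A x (e - Complex.I • f)‖ : ℂ) ^ 2 - (‖A x (e + Complex.I • f)‖ : ℂ) ^ 2)
          * Complex.I) / 4 := by
    funext x
    rw [inner_eq_sum_norm_sq_div_four]
    simp
  rw [this]
  simp only [div_eq_mul_inv]
  exact ((((h' _).pow 2).sub ((h' _).pow 2)).add
    ((((h' _).pow 2).sub ((h' _).pow 2)).mul_const _)).mul_const _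

lemma op_aesm {n : ℕ} {X : Type*} [MeasurableSpace X] {μ : Measure X}
    {A : X → (EE n →L[ℂ] EE n)} (hA : ∀ x, 0 ≤ A x)
    (h : ∀ e : EE n, AEStronglyMeasurable (fun x => ‖A x e‖) μ) :
    AEStronglyMeasurable A μ := by
  have hS : AEStronglyMeasurable (fun x => A x * A x) μ := by
    refine clm_aesm fun e f => ?_
    refine (inner_meas h e f).congr (Filter.Eventually.of_forall fun x => ?_)
    have hsa : IsSelfAdjoint (A x) := IsSelfAdjoint.of_nonneg (hA x)
    exact (ContinuousLinearMap.isSelfAdjoint_iff_isSymmetric.1 hsa) e (A x f)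
  have hc : ContinuousOn (fun a : EE n →L[ℂ] EE n => CFC.sqrt a) {a | 0 ≤ a} := by
    have := ContinuousOn.cfc_nnreal_of_mem_nhdsSet (X := EE n →L[ℂ] EE n)
      (A := EE n →L[ℂ] EE n) (s := Set.univ) NNReal.sqrt (a := id) (t := {a | 0 ≤ a})
      (by simp) continuousOn_id (fun x hx => hx) (NNReal.continuous_sqrt.continuousOn)
    refine this.congr fun a ha => ?_
    simp only [id]
    exact CFC.sqrt_eq_cfc
  have hcl : IsClosed {a : EE n →L[ℂ] EE n | 0 ≤ a} := CStarAlgebra.isClosed_nonneg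
  have hA2 : ∀ x, 0 ≤ A x * A x := fun x => by
    have hsa : IsSelfAdjoint (A x) := IsSelfAdjoint.of_nonneg (hA x)
    simpa [hsa.star_eq] using star_mul_self_nonneg (A x)
  have hr : Continuous (fun a : {a : EE n →L[ℂ] EE n | 0 ≤ a} => CFC.sqrt a.1) :=
    continuousOn_iff_continuous_domRestrict.1 hc
  have hS' : AEStronglyMeasurable
      (fun x => (⟨A x * A x, hA2 x⟩ : {a : EE n →L[ℂ] EE n | 0 ≤ a})) μ :=
    (Topology.IsEmbedding.subtypeVal.aestronglyMeasurable_comp_iff (g := Subtype.val)).1 hS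
  refine (hr.comp_aestronglyMeasurable hS').congr (Filter.Eventually.of_forall fun x => ?_)
  exact CFC.sqrt_mul_self (A x) (hA x)

/-! ### Duality estimates -/

lemma aesm_of_rpow {X : Type*} [MeasurableSpace X] {μ : Measure X} {g : X → ℝ} {q : ℝ}
    (hq : 0 < q) (hg : ∀ x, 0 ≤ g x) (h : Integrable (fun x => g x ^ q) μ) :
    AEStronglyMeasurable g μ := by
  have h2 := (h.aestronglyMeasurable.aemeasurable.pow_const (1 / q)).aestronglyMeasurable
  refine h2.congr (Filter.Eventually.of_forall fun x => ?_)
  show (g x ^ q) ^ (1 / q) = g x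
  rw [← Real.rpow_mul (hg x), mul_one_div_cancel hq.ne', Real.rpow_one]

lemma memLp_of_rpow {X : Type*} [MeasurableSpace X] {μ : Measure X} {g : X → ℝ} {q : ℝ}
    (hq : 0 < q) (hg : ∀ x, 0 ≤ g x) (h : Integrable (fun x => g x ^ q) μ) :
    MemLp g (ENNReal.ofReal q) μ := by
  rw [← integrable_norm_rpow_iff (aesm_of_rpow hq hg h) (by simpa using hq) (by simp),
    ENNReal.toReal_ofReal hq.le]
  simpa [abs_of_nonneg, hg] using h

lemma inner_sa {n : ℕ} {A : EE n →L[ℂ] EE n} (hA : 0 ≤ A) (e f : EE n) :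
    inner ℂ (A e) f = inner ℂ e (A f) :=
  (ContinuousLinearMap.isSelfAdjoint_iff_isSymmetric.1 (IsSelfAdjoint.of_nonneg hA)) e f

lemma integrable_op {n : ℕ} {X : Type*} [MeasurableSpace X] {μ : Measure X}
    {A : X → (EE n →L[ℂ] EE n)} (hA : ∀ x, 0 ≤ A x) {q : ℝ} (hq : 0 < q)
    (h : ∀ e : EE n, Integrable (fun x => ‖A x e‖ ^ q) μ) :
    Integrable (fun x => ‖A x‖ ^ q) μ := by
  have hm : AEStronglyMeasurable A μ :=
    op_aesm hA fun e => aesm_of_rpow hq (fun _ => norm_nonneg _) (h e)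
  have hI : Integrable (fun x => (n : ℝ) ^ q * ∑ i, ‖A x (bb n i)‖ ^ q) μ :=
    (integrable_finsetSum _ fun i _ => h (bb n i)).const_mul _
  refine hI.mono' (hm.norm.aemeasurable.pow_const q).aestronglyMeasurable
    (Filter.Eventually.of_forall fun x => ?_)
  rw [Real.norm_of_nonneg (by positivity)]
  exact opnorm_rpow_le _ hq

lemma dual_bound {n : ℕ} {X : Type*} [MeasurableSpace X] {μ : Measure X} [IsProbabilityMeasure μ]
    {A B : X → (EE n →L[ℂ] EE n)} {p q : ℝ} (hpq : p.HolderConjugate q)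
    (hA : ∀ x, 0 ≤ A x) (hAB : ∀ x, A x * B x = 1)
    (hAi : ∀ e : EE n, Integrable (fun x => ‖A x e‖ ^ p) μ)
    (hBi : ∀ e : EE n, Integrable (fun x => ‖B x e‖ ^ q) μ)
    {V U : EE n →L[ℂ] EE n} (hU : 0 ≤ U) (hVU : V * U = 1)
    (hV : ∀ e, (∫ x, ‖A x e‖ ^ p ∂μ) ^ (1 / p) ≤ ‖V e‖) (f : EE n) :
    ‖U f‖ ^ q ≤ ∫ x, ‖B x f‖ ^ q ∂μ := by
  have hq0 : 0 < q := hpq.symm.pos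
  have hp0 : 0 < p := hpq.pos
  set g := U f with hg
  have hpt : ∀ x, ‖g‖ ^ 2 ≤ ‖B x f‖ * ‖A x (U g)‖ := by
    intro x
    have h1 : inner ℂ g g = inner ℂ (B x f) (A x (U g)) := by
      have e1 : f = A x (B x f) := by
        have := congrArg (fun T : EE n →L[ℂ] EE n => T f) (hAB x)
        simpa using this.symm
      calc inner ℂ g g = inner ℂ f (U g) := inner_sa hU f g
        _ = inner ℂ (A x (B x f)) (U g) := by rw [← e1]
        _ = _ := inner_sa (hA x) _ _
    have h2 : ‖g‖ ^ 2 = ‖inner ℂ g g‖ := by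
      rw [inner_self_eq_norm_sq_to_K]; simp
    rw [h2, h1]
    exact norm_inner_le_norm _ _
  have hB' := memLp_of_rpow hq0 (fun _ => norm_nonneg _) (hBi f)
  have hA' := memLp_of_rpow hp0 (fun _ => norm_nonneg _) (hAi (U g))
  have hol := integral_mul_le_Lp_mul_Lq_of_nonneg hpq.symm (μ := μ)
    (Filter.Eventually.of_forall fun x => norm_nonneg (B x f))
    (Filter.Eventually.of_forall fun x => norm_nonneg (A x (U g))) hB' hA'
  have hconj : (ENNReal.ofReal q).HolderConjugate (ENNReal.ofReal p) :=
    hpq.symm.ennrealOfReal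
  have hint : Integrable (fun x => ‖B x f‖ * ‖A x (U g)‖) μ := hB'.integrable_mul hA'
  have h3 : ‖g‖ ^ 2 ≤ ∫ x, ‖B x f‖ * ‖A x (U g)‖ ∂μ := by
    have := integral_mono (μ := μ) (integrable_const (‖g‖ ^ 2)) hint hpt
    simpa using this
  have h4 : V (U g) = g := by
    have := congrArg (fun T : EE n →L[ℂ] EE n => T g) hVU
    simpa using this
  set N := ∫ x, ‖B x f‖ ^ q ∂μ with hN
  have hN0 : 0 ≤ N := integral_nonneg fun x => by positivity
  have h5 : ‖g‖ ^ 2 ≤ N ^ (1 / q) * ‖g‖ := by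
    refine h3.trans (hol.trans ?_)
    have h8 := hV (U g)
    rw [h4] at h8
    exact mul_le_mul_of_nonneg_left h8 (Real.rpow_nonneg hN0 _)
  have h6 : ‖g‖ ≤ N ^ (1 / q) := by
    have hR : 0 ≤ N ^ (1 / q) := Real.rpow_nonneg hN0 _
    clear_value N g
    rcases eq_or_lt_of_le (norm_nonneg g) with h | h
    · exact h.symm.le.trans hR
    · rw [sq] at h5
      exact le_of_mul_le_mul_right h5 h
  clear_value N g
  calc ‖g‖ ^ q ≤ (N ^ (1 / q)) ^ q := by gcongr
    _ = N := by rw [← Real.rpow_mul hN0, one_div_mul_cancel hq0.ne', Real.rpow_one]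

set_option maxHeartbeats 1000000 in
lemma ap_bound {n : ℕ} {X : Type*} [MeasurableSpace X] {μ : Measure X} [IsProbabilityMeasure μ]
    {A B : X → (EE n →L[ℂ] EE n)} {p q : ℝ} (hpq : p.HolderConjugate q)
    (hA : ∀ x, 0 ≤ A x) (hB : ∀ x, 0 ≤ B x)
    (hAi : ∀ e : EE n, Integrable (fun x => ‖A x e‖ ^ p) μ)
    (hBi : ∀ e : EE n, Integrable (fun x => ‖B x e‖ ^ q) μ)
    {C c : ℝ} (hC : 0 ≤ C) (hc : 0 ≤ c)
    (hAp : ∫ x, (∫ t, ‖A x * B t‖ ^ q ∂μ) ^ (p / q) ∂μ ≤ C)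
    {V : EE n →L[ℂ] EE n} (hV0 : 0 ≤ V)
    (hV : ∀ e, ‖V e‖ ≤ c * (∫ x, ‖A x e‖ ^ p ∂μ) ^ (1 / p)) (e : EE n) :
    ∫ t, ‖B t (V e)‖ ^ q ∂μ ≤ (c * ‖e‖) ^ q * C ^ (q / p) := by
  have hq0 : 0 < q := hpq.symm.pos
  have hp0 : 0 < p := hpq.pos
  have hq1 : 1 < q := hpq.symm.lt
  have hAm : AEStronglyMeasurable A μ :=
    op_aesm hA fun e => aesm_of_rpow hp0 (fun _ => norm_nonneg _) (hAi e)
  have hBm : AEStronglyMeasurable B μ :=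
    op_aesm hB fun e => aesm_of_rpow hq0 (fun _ => norm_nonneg _) (hBi e)
  have hAn := integrable_op hA hp0 hAi
  have hBn := integrable_op hB hq0 hBi
  have hABi : ∀ x, Integrable (fun t => ‖A x * B t‖ ^ q) μ := by
    intro x
    refine (hBn.const_mul (‖A x‖ ^ q)).mono' ?_ (Filter.Eventually.of_forall fun t => ?_)
    · exact (((continuous_const.mul continuous_id).comp_aestronglyMeasurable
        hBm).norm.aemeasurable.pow_const q).aestronglyMeasurable
    · rw [Real.norm_of_nonneg (by positivity),
        ← Real.mul_rpow (norm_nonneg _) (norm_nonneg _)]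
      gcongr
      exact norm_mul_le _ _
  set G : X → ℝ := fun x => ∫ t, ‖A x * B t‖ ^ q ∂μ with hG
  have hG0 : ∀ x, 0 ≤ G x := fun x => integral_nonneg fun t => by positivity
  have hGm : AEStronglyMeasurable G μ := by
    have h1 : AEStronglyMeasurable (fun z : X × X => ‖A z.1 * B z.2‖ ^ q) (μ.prod μ) :=
      ((hAm.comp_fst.mul hBm.comp_snd).norm.aemeasurable.pow_const q).aestronglyMeasurable
    exact h1.integral_prod_right'
  have hGi : Integrable (fun x => G x ^ (p / q)) μ := by
    refine (hAn.const_mul ((∫ t, ‖B t‖ ^ q ∂μ) ^ (p / q))).mono'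
      (hGm.aemeasurable.pow_const _).aestronglyMeasurable (Filter.Eventually.of_forall fun x => ?_)
    rw [Real.norm_of_nonneg (by have := hG0 x; positivity)]
    have h1 : G x ≤ ‖A x‖ ^ q * ∫ t, ‖B t‖ ^ q ∂μ := by
      rw [← integral_const_mul]
      refine integral_mono (hABi x) (hBn.const_mul _) fun t => ?_
      show ‖A x * B t‖ ^ q ≤ ‖A x‖ ^ q * ‖B t‖ ^ q
      rw [← Real.mul_rpow (norm_nonneg _) (norm_nonneg _)]
      gcongr
      exact norm_mul_le _ _
    have hI0 : 0 ≤ ∫ t, ‖B t‖ ^ q ∂μ := integral_nonneg fun t => by positivity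
    calc G x ^ (p / q) ≤ (‖A x‖ ^ q * ∫ t, ‖B t‖ ^ q ∂μ) ^ (p / q) := by
          have := hG0 x
          gcongr
      _ = _ := by
          rw [Real.mul_rpow (by positivity) hI0, ← Real.rpow_mul (norm_nonneg _),
            mul_div_cancel₀ _ hq0.ne', mul_comm]
  set v := V e with hv
  set b : X → ℝ := fun t => ‖B t v‖ with hb
  have hb0 : ∀ t, 0 ≤ b t := fun t => norm_nonneg _
  have hbm : AEStronglyMeasurable b μ := aesm_of_rpow hq0 hb0 (hBi v)
  have hb1 : ∀ t, b t ^ (q - 2) * b t = b t ^ (q - 1) := by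
    intro t
    rcases eq_or_lt_of_le (hb0 t) with h | h
    · rw [← h, mul_zero, Real.zero_rpow (by linarith)]
    · rw [← Real.rpow_add_one h.ne']; congr 1; ring
  have hb2 : ∀ t, b t ^ (q - 1) * b t = b t ^ q := by
    intro t
    rcases eq_or_lt_of_le (hb0 t) with h | h
    · rw [← h, mul_zero, Real.zero_rpow (by linarith)]
    · rw [← Real.rpow_add_one h.ne']; congr 1; ring
  have hexp : (q - 1) * p = q := by
    have := hpq.symm.sub_one_mul_conj
    linarith
  have hb3 : Integrable (fun t => (b t ^ (q - 1)) ^ p) μ := by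
    refine (hBi v).congr (Filter.Eventually.of_forall fun t => ?_)
    show b t ^ q = (b t ^ (q - 1)) ^ p
    rw [← Real.rpow_mul (hb0 t), hexp]
  have hbL : MemLp (fun t => b t ^ (q - 1)) (ENNReal.ofReal p) μ :=
    memLp_of_rpow hp0 (fun t => Real.rpow_nonneg (hb0 t) _) hb3
  have hconj : (ENNReal.ofReal q).HolderConjugate (ENNReal.ofReal p) :=
    hpq.symm.ennrealOfReal
  set F : X → EE n := fun t => ((b t ^ (q - 2) : ℝ) : ℂ) • B t (B t v) with hF
  have hBv : AEStronglyMeasurable (fun t => B t (B t v)) μ := by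
    have hc : Continuous (fun T : EE n →L[ℂ] EE n => T (T v)) := by fun_prop
    exact hc.comp_aestronglyMeasurable hBm
  have hFm : AEStronglyMeasurable F μ := by
    refine AEStronglyMeasurable.fun_smul ?_ hBv
    exact Complex.continuous_ofReal.comp_aestronglyMeasurable
      (hbm.aemeasurable.pow_const _).aestronglyMeasurable
  have hTF : ∀ (T : EE n →L[ℂ] EE n) t, ‖T (F t)‖ ≤ ‖T * B t‖ * b t ^ (q - 1) := by
    intro T t
    rw [hF]
    simp only [map_smul, norm_smul, Complex.norm_real]
    rw [Real.norm_of_nonneg (Real.rpow_nonneg (hb0 t) _), ← hb1]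
    have : ‖T (B t (B t v))‖ ≤ ‖T * B t‖ * b t := (T * B t).le_opNorm (B t v)
    have h0 := Real.rpow_nonneg (hb0 t) (q - 2)
    calc _ ≤ b t ^ (q - 2) * (‖T * B t‖ * b t) := by gcongr
      _ = _ := by ring
  have hFi : Integrable F μ := by
    have h1 : Integrable (fun t => ‖B t‖ * b t ^ (q - 1)) μ :=
      (memLp_of_rpow hq0 (fun _ => norm_nonneg _) hBn).integrable_mul hbL
    refine h1.mono' hFm (Filter.Eventually.of_forall fun t => ?_)
    simpa using hTF 1 t
  set f := ∫ t, F t ∂μ with hf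
  set N := ∫ t, b t ^ q ∂μ with hN
  have hN0 : 0 ≤ N := integral_nonneg fun x => Real.rpow_nonneg (hb0 x) _
  have hAf : ∀ x, ‖A x f‖ ^ p ≤ N * G x ^ (p / q) := by
    intro x
    have h1 : ‖A x f‖ ≤ ∫ t, ‖A x * B t‖ * b t ^ (q - 1) ∂μ := by
      rw [hf, ← ContinuousLinearMap.integral_comp_comm _ hFi]
      refine norm_integral_le_of_norm_le ?_ (Filter.Eventually.of_forall (hTF (A x)))
      exact (memLp_of_rpow hq0 (fun _ => norm_nonneg _) (hABi x)).integrable_mul hbL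
    have hol := integral_mul_le_Lp_mul_Lq_of_nonneg hpq.symm (μ := μ)
      (Filter.Eventually.of_forall fun t => norm_nonneg (A x * B t))
      (Filter.Eventually.of_forall fun t => Real.rpow_nonneg (hb0 t) (q - 1))
      (memLp_of_rpow hq0 (fun _ => norm_nonneg _) (hABi x)) hbL
    have h2 : ∫ t, (b t ^ (q - 1)) ^ p ∂μ = N := by
      refine integral_congr_ae (Filter.Eventually.of_forall fun t => ?_)
      show (b t ^ (q - 1)) ^ p = b t ^ q
      rw [← Real.rpow_mul (hb0 t), hexp]
    rw [h2] at hol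
    have hGx := hG0 x
    calc ‖A x f‖ ^ p ≤ (G x ^ (1 / q) * N ^ (1 / p)) ^ p := by
          gcongr
          exact h1.trans hol
      _ = _ := by
          rw [Real.mul_rpow (by positivity) (by positivity), ← Real.rpow_mul hN0,
            ← Real.rpow_mul hGx, one_div_mul_cancel hp0.ne', Real.rpow_one, mul_comm]
          congr 2
          ring
  have hAfi : ∫ x, ‖A x f‖ ^ p ∂μ ≤ N * C := by
    calc _ ≤ ∫ x, N * G x ^ (p / q) ∂μ := integral_mono (hAi f) (hGi.const_mul N) hAf
      _ = N * ∫ x, G x ^ (p / q) ∂μ := integral_const_mul _ _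
      _ ≤ _ := by gcongr
  have hVf : ‖V f‖ ≤ c * (N * C) ^ (1 / p) := by
    refine (hV f).trans ?_
    have : 0 ≤ ∫ x, ‖A x f‖ ^ p ∂μ := integral_nonneg fun x => by positivity
    gcongr
  have hin : inner ℂ v f = ((N : ℝ) : ℂ) := by
    rw [hf, ← integral_inner hFi, hN, ← integral_complex_ofReal]
    refine integral_congr_ae (Filter.Eventually.of_forall fun t => ?_)
    show inner ℂ v (((b t ^ (q - 2) : ℝ) : ℂ) • B t (B t v)) = ((b t ^ q : ℝ) : ℂ)
    rw [inner_smul_right, ← inner_sa (hB t), inner_self_eq_norm_sq_to_K, ← hb2, ← hb1]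
    simp only [hb]
    push_cast
    simp only [Complex.coe_algebraMap]
    ring
  have hNle : N ≤ ‖e‖ * (c * (N * C) ^ (1 / p)) := by
    have h1 : N = ‖inner ℂ v f‖ := by rw [hin]; simp [abs_of_nonneg hN0]
    have h2 : inner ℂ v f = inner ℂ e (V f) := inner_sa hV0 e f
    calc N = ‖inner ℂ e (V f)‖ := by rw [← h2]; exact h1
      _ ≤ ‖e‖ * ‖V f‖ := norm_inner_le_norm _ _
      _ ≤ _ := mul_le_mul_of_nonneg_left hVf (norm_nonneg _)
  rcases eq_or_lt_of_le hN0 with h | h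
  · show N ≤ _
    rw [← h]; positivity
  have h7 : N ^ (1 / q) ≤ c * ‖e‖ * C ^ (1 / p) := by
    have e1 : N = N ^ (1 / q) * N ^ (1 / p) := by
      rw [← Real.rpow_add h]
      have : 1 / q + 1 / p = 1 := by
        have := hpq.inv_add_inv_eq_one
        simp only [one_div]; linarith
      rw [this, Real.rpow_one]
    rw [Real.mul_rpow hN0 hC] at hNle
    have hNp : 0 < N ^ (1 / p) := Real.rpow_pos_of_pos h _
    refine le_of_mul_le_mul_right ?_ hNp
    rw [← e1]
    linarith
  calc N = (N ^ (1 / q)) ^ q := by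
        rw [← Real.rpow_mul hN0, one_div_mul_cancel hq0.ne', Real.rpow_one]
    _ ≤ (c * ‖e‖ * C ^ (1 / p)) ^ q := by gcongr
    _ = _ := by
        rw [Real.mul_rpow (by positivity) (by positivity), ← Real.rpow_mul hC]
        congr 2
        ring

/-! ### Dyadic cubes -/

lemma mem_dCube {d : ℕ} {I : ℤ × (Fin d → ℤ)} {x : Fin d → ℝ} :
    x ∈ dCube d I ↔ ∀ i, (I.2 i : ℝ) * (2 : ℝ) ^ (-I.1) ≤ x i ∧
      x i < ((I.2 i : ℝ) + 1) * (2 : ℝ) ^ (-I.1) := by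
  simp [dCube, Set.mem_pi]

lemma dCube_nested_aux {d : ℕ} {I J : ℤ × (Fin d → ℤ)} (hIJ : J.1 ≤ I.1) {x : Fin d → ℝ}
    (hx : x ∈ dCube d I) (hx' : x ∈ dCube d J) : dCube d I ⊆ dCube d J := by
  obtain ⟨r, hr⟩ := Int.le.dest hIJ
  have hpow : (2 : ℝ) ^ (-J.1) = (2 : ℝ) ^ r * (2 : ℝ) ^ (-I.1) := by
    rw [← zpow_natCast, ← zpow_add₀ (by norm_num)]
    congr 1
    lia
  have hs : (0 : ℝ) < (2 : ℝ) ^ (-I.1) := by positivity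
  intro y hy
  rw [mem_dCube] at hx hx' hy ⊢
  intro i
  obtain ⟨h1, h2⟩ := hx i
  obtain ⟨h3, h4⟩ := hx' i
  obtain ⟨h5, h6⟩ := hy i
  rw [hpow, ← mul_assoc] at h3 h4 ⊢
  have a1 : (J.2 i : ℝ) * 2 ^ r < (I.2 i : ℝ) + 1 :=
    lt_of_mul_lt_mul_right (h3.trans_lt h2) hs.le
  have a2 : (I.2 i : ℝ) < ((J.2 i : ℝ) + 1) * 2 ^ r :=
    lt_of_mul_lt_mul_right (h1.trans_lt h4) hs.le
  have b1 : J.2 i * 2 ^ r ≤ I.2 i := by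
    have : J.2 i * 2 ^ r < I.2 i + 1 := by exact_mod_cast a1
    lia
  have b2 : I.2 i + 1 ≤ (J.2 i + 1) * 2 ^ r := by
    have : I.2 i < (J.2 i + 1) * 2 ^ r := by exact_mod_cast a2
    lia
  have c1 : (J.2 i : ℝ) * 2 ^ r ≤ I.2 i := by exact_mod_cast b1
  have c2 : (I.2 i : ℝ) + 1 ≤ ((J.2 i : ℝ) + 1) * 2 ^ r := by exact_mod_cast b2
  constructor
  · exact (mul_le_mul_of_nonneg_right c1 hs.le).trans h5
  · rw [← mul_assoc]
    exact h6.trans_le (mul_le_mul_of_nonneg_right c2 hs.le)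

lemma dCube_nested {d : ℕ} (I J : ℤ × (Fin d → ℤ)) :
    dCube d I ⊆ dCube d J ∨ dCube d J ⊆ dCube d I ∨ Disjoint (dCube d I) (dCube d J) := by
  by_cases h : Disjoint (dCube d I) (dCube d J)
  · exact Or.inr (Or.inr h)
  · obtain ⟨x, hx, hx'⟩ := Set.not_disjoint_iff.1 h
    rcases le_total J.1 I.1 with h | h
    · exact Or.inl (dCube_nested_aux h hx hx')
    · exact Or.inr (Or.inl (dCube_nested_aux h hx' hx))

lemma dCube_Ico_lt {d : ℕ} (I : ℤ × (Fin d → ℤ)) (i : Fin d) :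
    (I.2 i : ℝ) * (2 : ℝ) ^ (-I.1) < ((I.2 i : ℝ) + 1) * (2 : ℝ) ^ (-I.1) := by
  have hs : (0 : ℝ) < (2 : ℝ) ^ (-I.1) := by positivity
  nlinarith

lemma dCube_nonempty {d : ℕ} (I : ℤ × (Fin d → ℤ)) : (dCube d I).Nonempty :=
  ⟨fun i => (I.2 i : ℝ) * (2 : ℝ) ^ (-I.1), mem_dCube.2 fun i => ⟨le_rfl, dCube_Ico_lt I i⟩⟩

lemma dCube_inj {d : ℕ} (hd : d ≠ 0) {I J : ℤ × (Fin d → ℤ)} (h : dCube d I = dCube d J) :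
    I = J := by
  have key : ∀ i, Set.Ico ((I.2 i : ℝ) * (2 : ℝ) ^ (-I.1)) (((I.2 i : ℝ) + 1) * (2 : ℝ) ^ (-I.1))
      = Set.Ico ((J.2 i : ℝ) * (2 : ℝ) ^ (-J.1)) (((J.2 i : ℝ) + 1) * (2 : ℝ) ^ (-J.1)) := by
    intro i
    have hI := Set.eval_image_univ_pi (i := i) (dCube_nonempty I)
    have hJ := Set.eval_image_univ_pi (i := i) (dCube_nonempty J)
    rw [← hI, ← hJ]
    exact congrArg (fun s => Function.eval i '' s) h
  have hl : ∀ i, (I.2 i : ℝ) * (2 : ℝ) ^ (-I.1) = (J.2 i : ℝ) * (2 : ℝ) ^ (-J.1) := fun i => by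
    have := congrArg sInf (key i)
    rwa [csInf_Ico (dCube_Ico_lt I i), csInf_Ico (dCube_Ico_lt J i)] at this
  have hr : ∀ i, ((I.2 i : ℝ) + 1) * (2 : ℝ) ^ (-I.1) = ((J.2 i : ℝ) + 1) * (2 : ℝ) ^ (-J.1) :=
    fun i => by
    have := congrArg sSup (key i)
    rwa [csSup_Ico (dCube_Ico_lt I i), csSup_Ico (dCube_Ico_lt J i)] at this
  have i0 : Fin d := ⟨0, Nat.pos_of_ne_zero hd⟩
  have hk : (2 : ℝ) ^ (-I.1) = (2 : ℝ) ^ (-J.1) := by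
    have h1 := hl i0
    have h2 := hr i0
    linarith
  have hk' : I.1 = J.1 := by
    have := zpow_right_injective₀ (by norm_num : (0 : ℝ) < 2) (by norm_num) hk
    simpa using this
  refine Prod.ext hk' (funext fun i => ?_)
  have h1 := hl i
  rw [hk] at h1
  have := mul_right_cancel₀ (by positivity : (2 : ℝ) ^ (-J.1) ≠ 0) h1
  exact_mod_cast this

lemma dCube_isCube {d : ℕ} (I : ℤ × (Fin d → ℤ)) : IsCube (dCube d I) :=
  ⟨fun i => (I.2 i : ℝ) * (2 : ℝ) ^ (-I.1), (2 : ℝ) ^ (-I.1), by positivity, by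
    simp only [dCube, add_mul, one_mul]⟩

lemma dCube_meas {d : ℕ} (I : ℤ × (Fin d → ℤ)) : MeasurableSet (dCube d I) :=
  MeasurableSet.univ_pi fun _ => measurableSet_Ico

lemma dCube_vol_ne_zero {d : ℕ} (I : ℤ × (Fin d → ℤ)) : volume (dCube d I) ≠ 0 := by
  rw [dCube, volume_pi_pi, Finset.prod_ne_zero_iff]
  intro i _
  simpa [Real.volume_Ico] using dCube_Ico_lt I i

lemma dCube_vol_ne_top {d : ℕ} (I : ℤ × (Fin d → ℤ)) : volume (dCube d I) ≠ ⊤ := by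
  rw [dCube, volume_pi_pi]
  exact ENNReal.prod_ne_top fun i _ => by simp [Real.volume_Ico]

lemma dCube_cover {d : ℕ} (S : Set (ℤ × (Fin d → ℤ))) (I : ℤ × (Fin d → ℤ))
    (hsub : ∀ J ∈ S, dCube d J ⊆ dCube d I)
    (hdis : ∀ J ∈ S, ∀ K ∈ S, dCube d J = dCube d K ∨ Disjoint (dCube d J) (dCube d K))
    (ν : Measure (Fin d → ℝ)) (h : ∀ J ∈ S, volume (dCube d J) ≤ ν (dCube d J)) :
    volume (⋃ J ∈ S, dCube d J) ≤ ν (dCube d I) := by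
  have hU : ⋃ J ∈ S, dCube d J = ⋃ s ∈ dCube d '' S, s := by
    rw [Set.biUnion_image]
  have hcount : (dCube d '' S).Countable := (Set.to_countable S).image _
  rw [hU]
  calc volume (⋃ s ∈ dCube d '' S, s) ≤ ∑' s : (dCube d '' S), volume (s : Set (Fin d → ℝ)) :=
        measure_biUnion_le _ hcount _
    _ ≤ ∑' s : (dCube d '' S), ν (s : Set (Fin d → ℝ)) := by
        refine ENNReal.tsum_le_tsum fun s => ?_
        obtain ⟨_, J, hJ, rfl⟩ := s
        exact h J hJ
    _ = ν (⋃ s ∈ dCube d '' S, s) := by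
        refine (measure_biUnion (μ := ν) (f := fun s => s) hcount ?_ ?_).symm
        · rintro _ ⟨J, hJ, rfl⟩ _ ⟨K, hK, rfl⟩ hne
          exact (hdis J hJ K hK).resolve_left hne
        · rintro _ ⟨J, hJ, rfl⟩
          exact dCube_meas J
    _ ≤ ν (dCube d I) := by
        refine measure_mono (Set.iUnion₂_subset ?_)
        rintro _ ⟨J, hJ, rfl⟩
        exact hsub J hJ

lemma maxBad_disj {d n : ℕ} {p p' l1 l2 : ℝ} {V : ℤ × (Fin d → ℤ) → Matrix (Fin n) (Fin n) ℂ}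
    {I J K : ℤ × (Fin d → ℤ)} (hJ : MaxBad p p' l1 l2 V I J) (hK : MaxBad p p' l1 l2 V I K) :
    dCube d J = dCube d K ∨ Disjoint (dCube d J) (dCube d K) := by
  rcases dCube_nested J K with h | h | h
  · exact Or.inl (hJ.2.2 K h hK.1 hK.2.1).symm
  · exact Or.inl (hK.2.2 J h hJ.1 hJ.2.1)
  · exact Or.inr h

lemma one_step {d : ℕ} (S : Set (ℤ × (Fin d → ℤ))) (I : ℤ × (Fin d → ℤ))
    (hsub : ∀ J ∈ S, dCube d J ⊆ dCube d I)
    (hdis : ∀ J ∈ S, ∀ K ∈ S, dCube d J = dCube d K ∨ Disjoint (dCube d J) (dCube d K))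
    {h : (Fin d → ℝ) → ℝ} (h0 : ∀ x, 0 ≤ h x) (hi : IntegrableOn h (dCube d I) volume)
    (hJ : ∀ J ∈ S, 1 ≤ avg (dCube d J) h) (hI : avg (dCube d I) h ≤ 1 / 2) :
    volume (⋃ J ∈ S, dCube d J) ≤ volume (dCube d I) / 2 := by
  have hval : ∀ J, dCube d J ⊆ dCube d I →
      volume.withDensity (fun x => ENNReal.ofReal (h x)) (dCube d J)
        = ENNReal.ofReal (∫ x in dCube d J, h x) := by
    intro J hJI
    rw [withDensity_apply _ (dCube_meas J),
      ofReal_integral_eq_lintegral_ofReal (hi.mono_set hJI)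
        (Filter.Eventually.of_forall h0)]
  refine (dCube_cover S I hsub hdis (volume.withDensity fun x => ENNReal.ofReal (h x)) ?_).trans ?_
  · intro J hJS
    rw [hval J (hsub J hJS), ← ENNReal.ofReal_toReal (dCube_vol_ne_top J)]
    refine ENNReal.ofReal_le_ofReal ?_
    have hv : 0 < (volume (dCube d J)).toReal :=
      ENNReal.toReal_pos (dCube_vol_ne_zero J) (dCube_vol_ne_top J)
    have := hJ J hJS
    unfold avg at this
    rw [inv_mul_eq_div, le_div_iff₀ hv] at this
    linarith
  · rw [hval I subset_rfl]
    have hv : 0 < (volume (dCube d I)).toReal :=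
      ENNReal.toReal_pos (dCube_vol_ne_zero I) (dCube_vol_ne_top I)
    unfold avg at hI
    rw [inv_mul_eq_div, div_le_iff₀ hv] at hI
    calc ENNReal.ofReal (∫ x in dCube d I, h x)
        ≤ ENNReal.ofReal ((volume (dCube d I)).toReal / 2) :=
          ENNReal.ofReal_le_ofReal (by linarith)
      _ = _ := by
          rw [ENNReal.ofReal_div_of_pos (by norm_num),
            ENNReal.ofReal_toReal (dCube_vol_ne_top I)]
          norm_num

lemma stopFam_succ {d n : ℕ} {p p' l1 l2 : ℝ} {V : ℤ × (Fin d → ℤ) → Matrix (Fin n) (Fin n) ℂ}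
    (j : ℕ) (I : ℤ × (Fin d → ℤ)) :
    StopFam p p' l1 l2 V (j + 1) I =
      ⋃ K ∈ {J | MaxBad p p' l1 l2 V I J}, StopFam p p' l1 l2 V j K := by
  induction j with
  | zero => ext J; simp [StopFam]
  | succ j ih =>
    rw [StopFam, ih]
    ext J
    simp only [Set.mem_iUnion, StopFam]
    constructor
    · rintro ⟨K, ⟨L, hL, hK⟩, hJ⟩
      exact ⟨L, hL, K, hK, hJ⟩
    · rintro ⟨L, hL, K, hK, hJ⟩
      exact ⟨K, ⟨L, hL, hK⟩, hJ⟩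

lemma stop_decay {d n : ℕ} {p p' l1 l2 : ℝ} {V : ℤ × (Fin d → ℤ) → Matrix (Fin n) (Fin n) ℂ}
    (h1 : ∀ I, volume (⋃ J ∈ {J | MaxBad p p' l1 l2 V I J}, dCube d J) ≤ volume (dCube d I) / 2)
    (j : ℕ) : ∀ I, volume (⋃ J ∈ StopFam p p' l1 l2 V j I, dCube d J)
      ≤ volume (dCube d I) / 2 ^ j := by
  induction j with
  | zero => intro I; simp [StopFam]
  | succ j ih =>
    intro I
    have hinj : ∀ J ∈ {J | MaxBad p p' l1 l2 V I J}, ∀ K ∈ {J | MaxBad p p' l1 l2 V I J},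
        J ≠ K → Disjoint (dCube d J) (dCube d K) := by
      intro J hJ K hK hne
      refine (maxBad_disj hJ hK).resolve_left fun heq => ?_
      by_cases hd : d = 0
      · subst hd
        have hU : dCube 0 J = dCube 0 I := by
          rw [dCube, dCube]
          ext x; simp
        have h2 : volume (dCube 0 I) ≤ volume (dCube 0 I) / 2 := by
          refine le_trans (measure_mono ?_) (h1 I)
          rw [← hU]
          exact Set.subset_biUnion_of_mem (u := fun J => dCube 0 J) hJ
        exact absurd h2 (not_le.2 (ENNReal.half_lt_self (dCube_vol_ne_zero I)
          (dCube_vol_ne_top I)))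
      · exact hne (dCube_inj hd heq)
    set S := {J | MaxBad p p' l1 l2 V I J} with hS
    have hc : S.Countable := Set.to_countable S
    calc volume (⋃ J ∈ StopFam p p' l1 l2 V (j + 1) I, dCube d J)
        = volume (⋃ K ∈ S, ⋃ J ∈ StopFam p p' l1 l2 V j K, dCube d J) := by
          rw [stopFam_succ, Set.biUnion_iUnion]
          simp only [Set.biUnion_iUnion, hS]
      _ ≤ ∑' K : S, volume (⋃ J ∈ StopFam p p' l1 l2 V j K, dCube d J) :=
          measure_biUnion_le _ hc _
      _ ≤ ∑' K : S, volume (dCube d K) / 2 ^ j := ENNReal.tsum_le_tsum fun K => ih K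
      _ = (∑' K : S, volume (dCube d K)) / 2 ^ j := by
          simp only [div_eq_mul_inv, ENNReal.tsum_mul_right]
      _ = volume (⋃ K ∈ S, dCube d K) / 2 ^ j := by
          rw [measure_biUnion hc (fun J hJ K hK hne => hinj J hJ K hK hne)
            (fun J _ => dCube_meas J)]
      _ ≤ volume (dCube d I) / 2 / 2 ^ j := ENNReal.div_le_div_right (h1 I) _
      _ = volume (dCube d I) / 2 ^ (j + 1) := by
          simp only [div_eq_mul_inv]
          rw [mul_assoc, ← ENNReal.mul_inv (by simp) (by simp), pow_succ']

/-! ### Translation and conclusion -/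

/-- The operator attached to a matrix. -/
noncomputable def opM {n : ℕ} (M : Matrix (Fin n) (Fin n) ℂ) : EE n →L[ℂ] EE n :=
  Matrix.toEuclideanCLM (𝕜 := ℂ) M

lemma vecNorm_eq {n : ℕ} (M : Matrix (Fin n) (Fin n) ℂ) (e : Fin n → ℂ) :
    vecNorm (M.mulVec e) = ‖opM M (WithLp.toLp 2 e)‖ := rfl

lemma vecNorm_eq' {n : ℕ} (M : Matrix (Fin n) (Fin n) ℂ) (e : EE n) :
    vecNorm (M.mulVec (WithLp.ofLp e)) = ‖opM M e‖ := rfl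

lemma matNorm_eq {n : ℕ} (M : Matrix (Fin n) (Fin n) ℂ) : matNorm M = ‖opM M‖ := rfl

lemma opM_mul {n : ℕ} (M N : Matrix (Fin n) (Fin n) ℂ) : opM (M * N) = opM M * opM N :=
  map_mul _ M N

lemma opM_one {n : ℕ} : opM (1 : Matrix (Fin n) (Fin n) ℂ) = 1 := map_one _

lemma opM_nonneg {n : ℕ} {M : Matrix (Fin n) (Fin n) ℂ} (h : M.PosDef) : 0 ≤ opM M := by
  rw [ContinuousLinearMap.nonneg_iff_isPositive]
  exact ContinuousLinearMap.isPositive_toLinearMap_iff _ |>.1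
    (Matrix.isPositive_toEuclideanLin_iff.2 h.posSemidef)

lemma opM_inv {n : ℕ} {M : Matrix (Fin n) (Fin n) ℂ} (h : M.PosDef) :
    opM M * opM M⁻¹ = 1 ∧ opM M⁻¹ * opM M = 1 := by
  have hu : IsUnit M.det := (Matrix.isUnit_iff_isUnit_det M).1 h.isUnit
  rw [← opM_mul, ← opM_mul, Matrix.mul_nonsing_inv _ hu, Matrix.nonsing_inv_mul _ hu, opM_one]
  exact ⟨rfl, rfl⟩

/-- Normalised measure on a dyadic cube. -/
noncomputable def nu {d : ℕ} (I : ℤ × (Fin d → ℤ)) : Measure (Fin d → ℝ) :=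
  ProbabilityTheory.cond volume (dCube d I)

instance nu_prob {d : ℕ} (I : ℤ × (Fin d → ℤ)) : IsProbabilityMeasure (nu I) :=
  ProbabilityTheory.cond_isProbabilityMeasure_of_finite (dCube_vol_ne_zero I) (dCube_vol_ne_top I)

lemma avg_eq {d : ℕ} (I : ℤ × (Fin d → ℤ)) (g : (Fin d → ℝ) → ℝ) :
    avg (dCube d I) g = ∫ x, g x ∂(nu I) := by
  rw [nu, ProbabilityTheory.cond, integral_smul_measure, avg, ENNReal.toReal_inv, smul_eq_mul]

lemma nu_int {d : ℕ} (I : ℤ × (Fin d → ℤ)) {g : (Fin d → ℝ) → ℝ}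
    (h : IntegrableOn g (dCube d I) volume) : Integrable g (nu I) :=
  Integrable.smul_measure h (ENNReal.inv_ne_top.2 (dCube_vol_ne_zero I))

lemma bb_norm {n : ℕ} (i : Fin n) : ‖bb n i‖ = 1 := by simp [bb]

lemma main_step {d n : ℕ} {p q : ℝ} (hpq : p.HolderConjugate q)
    {A B : (Fin d → ℝ) → (EE n →L[ℂ] EE n)}
    (hA : ∀ x, 0 ≤ A x) (hB : ∀ x, 0 ≤ B x) (hAB : ∀ x, A x * B x = 1)
    (hAi : ∀ (I : ℤ × (Fin d → ℤ)) e, IntegrableOn (fun x => ‖A x e‖ ^ p) (dCube d I) volume)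
    (hBi : ∀ (I : ℤ × (Fin d → ℤ)) e, IntegrableOn (fun x => ‖B x e‖ ^ q) (dCube d I) volume)
    {Cw : ℝ} (hCw : 1 ≤ Cw)
    (hAp : ∀ I : ℤ × (Fin d → ℤ),
      ∫ x, (∫ t, ‖A x * B t‖ ^ q ∂(nu I)) ^ (p / q) ∂(nu I) ≤ Cw)
    {V U : ℤ × (Fin d → ℤ) → (EE n →L[ℂ] EE n)} (hV0 : ∀ I, 0 ≤ V I) (hU0 : ∀ I, 0 ≤ U I)
    (hVU : ∀ I, V I * U I = 1)
    (hV1 : ∀ I e, (∫ x, ‖A x e‖ ^ p ∂(nu I)) ^ (1 / p) ≤ ‖V I e‖)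
    (hV2 : ∀ I e, ‖V I e‖ ≤ Real.sqrt n * (∫ x, ‖A x e‖ ^ p ∂(nu I)) ^ (1 / p))
    {c1 c2 : ℝ} (hc1 : c1 = 4 * ((n : ℝ) ^ p * Real.sqrt n ^ p * n) + 2)
    (hc2 : c2 = 4 * ((n : ℝ) ^ q * Real.sqrt n ^ q * n) + 2)
    (I : ℤ × (Fin d → ℤ)) (S : Set (ℤ × (Fin d → ℤ)))
    (hsub : ∀ J ∈ S, dCube d J ⊆ dCube d I)
    (hdis : ∀ J ∈ S, ∀ K ∈ S, dCube d J = dCube d K ∨ Disjoint (dCube d J) (dCube d K))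
    (hbad : ∀ J ∈ S, c1 < ‖V J * U I‖ ^ p ∨ c2 * Cw ^ (q / p) < ‖U J * V I‖ ^ q) :
    volume (⋃ J ∈ S, dCube d J) ≤ volume (dCube d I) / 2 := by
  have hq0 : 0 < q := hpq.symm.pos
  have hp0 : 0 < p := hpq.pos
  have hC0 : 0 < Cw ^ (q / p) := by positivity
  have hk1 : 0 ≤ (n : ℝ) ^ p * Real.sqrt n ^ p := by positivity
  have hk2 : 0 ≤ (n : ℝ) ^ q := by positivity
  have hc1p : 0 < c1 := by rw [hc1]; positivity
  have hc2p : 0 < c2 := by rw [hc2]; positivity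
  set k1 : ℝ := (n : ℝ) ^ p * Real.sqrt n ^ p / c1 with hk1d
  set k2 : ℝ := (n : ℝ) ^ q / (c2 * Cw ^ (q / p)) with hk2d
  have hk1p : 0 ≤ k1 := by positivity
  have hk2p : 0 ≤ k2 := by positivity
  set g1 : (Fin d → ℝ) → ℝ := fun x => ∑ i, ‖A x (U I (bb n i))‖ ^ p with hg1
  set g2 : (Fin d → ℝ) → ℝ := fun x => ∑ i, ‖B x (V I (bb n i))‖ ^ q with hg2
  have hg1n : ∀ x, 0 ≤ g1 x := fun x => Finset.sum_nonneg fun i _ => by positivity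
  have hg2n : ∀ x, 0 ≤ g2 x := fun x => Finset.sum_nonneg fun i _ => by positivity
  have hAn : ∀ J e, Integrable (fun x => ‖A x e‖ ^ p) (nu J) := fun J e => nu_int J (hAi J e)
  have hBn : ∀ J e, Integrable (fun x => ‖B x e‖ ^ q) (nu J) := fun J e => nu_int J (hBi J e)
  have hg1i : ∀ J, Integrable g1 (nu J) := fun J =>
    integrable_finsetSum _ fun i _ => hAn J _
  have hg2i : ∀ J, Integrable g2 (nu J) := fun J =>
    integrable_finsetSum _ fun i _ => hBn J _
  have hg1s : ∀ J, ∫ x, g1 x ∂(nu J) = ∑ i, ∫ x, ‖A x (U I (bb n i))‖ ^ p ∂(nu J) := fun J =>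
    integral_finsetSum _ fun i _ => hAn J _
  have hg2s : ∀ J, ∫ x, g2 x ∂(nu J) = ∑ i, ∫ x, ‖B x (V I (bb n i))‖ ^ q ∂(nu J) := fun J =>
    integral_finsetSum _ fun i _ => hBn J _
  have hsum : ∀ J, ∫ x, (k1 * g1 x + k2 * g2 x) ∂(nu J)
      = k1 * ∫ x, g1 x ∂(nu J) + k2 * ∫ x, g2 x ∂(nu J) := fun J => by
    rw [integral_add ((hg1i J).const_mul _) ((hg2i J).const_mul _), integral_const_mul,
      integral_const_mul]
  refine one_step S I hsub hdis (h := fun x => k1 * g1 x + k2 * g2 x)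
    (fun x => add_nonneg (mul_nonneg hk1p (hg1n x)) (mul_nonneg hk2p (hg2n x))) ?_ ?_ ?_
  · refine Integrable.add (Integrable.const_mul ?_ _) (Integrable.const_mul ?_ _)
    · exact integrable_finsetSum _ fun i _ => hAi I _
    · exact integrable_finsetSum _ fun i _ => hBi I _
  · intro J hJ
    rw [avg_eq, hsum]
    have hI1 : 0 ≤ ∫ x, g1 x ∂(nu J) := integral_nonneg hg1n
    have hI2 : 0 ≤ ∫ x, g2 x ∂(nu J) := integral_nonneg hg2n
    rcases hbad J hJ with h | h
    · have h1 : ‖V J * U I‖ ^ p ≤ (n : ℝ) ^ p * Real.sqrt n ^ p * ∫ x, g1 x ∂(nu J) := by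
        refine (opnorm_rpow_le _ hp0).trans ?_
        rw [mul_assoc, hg1s]
        refine mul_le_mul_of_nonneg_left ?_ (by positivity)
        rw [Finset.mul_sum]
        refine Finset.sum_le_sum fun i _ => ?_
        have hint : 0 ≤ ∫ x, ‖A x (U I (bb n i))‖ ^ p ∂(nu J) :=
          integral_nonneg fun x => by positivity
        calc ‖(V J * U I) (bb n i)‖ ^ p
            ≤ (Real.sqrt n * (∫ x, ‖A x (U I (bb n i))‖ ^ p ∂(nu J)) ^ (1 / p)) ^ p :=
              Real.rpow_le_rpow (norm_nonneg _) (hV2 J (U I (bb n i))) hp0.le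
          _ = _ := by
              rw [Real.mul_rpow (Real.sqrt_nonneg _) (Real.rpow_nonneg hint _),
                ← Real.rpow_mul hint, one_div_mul_cancel hp0.ne', Real.rpow_one]
      have h2 : 1 ≤ k1 * ∫ x, g1 x ∂(nu J) := by
        rw [hk1d, div_mul_eq_mul_div, le_div_iff₀ hc1p]
        linarith
      have h3 := mul_nonneg hk2p hI2
      linarith
    · have h1 : ‖U J * V I‖ ^ q ≤ (n : ℝ) ^ q * ∫ x, g2 x ∂(nu J) := by
        refine (opnorm_rpow_le _ hq0).trans ?_
        rw [hg2s]
        refine mul_le_mul_of_nonneg_left (Finset.sum_le_sum fun i _ => ?_) (by positivity)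
        exact dual_bound hpq hA hAB (hAn J) (hBn J) (hU0 J) (hVU J) (hV1 J) (V I (bb n i))
      have h2 : 1 ≤ k2 * ∫ x, g2 x ∂(nu J) := by
        rw [hk2d, div_mul_eq_mul_div, le_div_iff₀ (mul_pos hc2p hC0)]
        linarith
      have h3 := mul_nonneg hk1p hI1
      linarith
  · rw [avg_eq, hsum]
    have h1 : ∫ x, g1 x ∂(nu I) ≤ n := by
      rw [hg1s]
      have : ∀ i ∈ Finset.univ, ∫ x, ‖A x (U I (bb n i))‖ ^ p ∂(nu I) ≤ 1 := by
        intro i _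
        have hint : 0 ≤ ∫ x, ‖A x (U I (bb n i))‖ ^ p ∂(nu I) :=
          integral_nonneg fun x => by positivity
        have h2 := hV1 I (U I (bb n i))
        have h3 : V I (U I (bb n i)) = bb n i :=
          congrArg (fun T : EE n →L[ℂ] EE n => T (bb n i)) (hVU I)
        rw [h3, bb_norm] at h2
        have h4 := Real.rpow_le_rpow (Real.rpow_nonneg hint _) h2 hp0.le
        rwa [← Real.rpow_mul hint, one_div_mul_cancel hp0.ne', Real.rpow_one,
          Real.one_rpow] at h4
      refine (Finset.sum_le_sum this).trans ?_
      simp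
    have h2 : ∫ x, g2 x ∂(nu I) ≤ n * (Real.sqrt n ^ q * Cw ^ (q / p)) := by
      rw [hg2s]
      have : ∀ i ∈ Finset.univ, ∫ x, ‖B x (V I (bb n i))‖ ^ q ∂(nu I)
          ≤ Real.sqrt n ^ q * Cw ^ (q / p) := by
        intro i _
        have := ap_bound hpq hA hB (hAn I) (hBn I) (zero_le_one.trans hCw) (Real.sqrt_nonneg n)
          (hAp I) (hV0 I) (hV2 I) (bb n i)
        rwa [bb_norm, mul_one] at this
      refine (Finset.sum_le_sum this).trans ?_
      simp
    have h3 : k1 * ∫ x, g1 x ∂(nu I) ≤ 1 / 4 := by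
      refine (mul_le_mul_of_nonneg_left h1 hk1p).trans ?_
      rw [hk1d, div_mul_eq_mul_div, div_le_iff₀ hc1p, hc1]
      linarith
    have h4 : k2 * ∫ x, g2 x ∂(nu I) ≤ 1 / 4 := by
      refine (mul_le_mul_of_nonneg_left h2 hk2p).trans ?_
      rw [hk2d, div_mul_eq_mul_div, div_le_iff₀ (mul_pos hc2p hC0), hc2]
      nlinarith
    linarith

/-- Decaying stopping time: for a matrix `A_p` weight `W` (characteristic at most `Cw`, with
`Wp = W^{1/p}`, `Wm = W^{-1/p}`) and reducing operators `V_I`, there are `λ₁ = c₁ ≈ 1`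
(depending only on `n`, `d`, `p`) and `λ₂ = c₂ Cw^{p'/p}` such that
`|⋃ J^j(I)| ≤ 2^{-j} |I|` for every dyadic cube `I` and every `j ≥ 0`. -/
theorem stmt9 {d n : ℕ} (p p' : ℝ) (hp : 1 < p) (hpp' : 1 / p + 1 / p' = 1) :
    ∃ c1 c2 : ℝ, 1 < c1 ∧ 1 < c2 ∧
      ∀ (Wp Wm : (Fin d → ℝ) → Matrix (Fin n) (Fin n) ℂ),
        (∀ x, (Wp x).PosDef) → (∀ x, Wm x = (Wp x)⁻¹) →
      ∀ Cw : ℝ, 1 ≤ Cw →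
      (∀ J : Set (Fin d → ℝ), IsCube J →
        avg J (fun x => (avg J fun t => matNorm (Wp x * Wm t) ^ p') ^ (p / p')) ≤ Cw) →
      (∀ J : Set (Fin d → ℝ), IsCube J →
        ∀ e : Fin n → ℂ, IntegrableOn (fun x => vecNorm ((Wp x).mulVec e) ^ p) J volume) →
      (∀ J : Set (Fin d → ℝ), IsCube J →
        ∀ e : Fin n → ℂ, IntegrableOn (fun x => vecNorm ((Wm x).mulVec e) ^ p') J volume) →
      ∀ V : ℤ × (Fin d → ℤ) → Matrix (Fin n) (Fin n) ℂ,
        (∀ I, (V I).PosDef) →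
        (∀ (I : ℤ × (Fin d → ℤ)) (e : Fin n → ℂ),
          (avg (dCube d I) fun x => vecNorm ((Wp x).mulVec e) ^ p) ^ (1 / p)
            ≤ vecNorm ((V I).mulVec e) ∧
          vecNorm ((V I).mulVec e)
            ≤ Real.sqrt n *
              (avg (dCube d I) fun x => vecNorm ((Wp x).mulVec e) ^ p) ^ (1 / p)) →
      ∀ (I : ℤ × (Fin d → ℤ)) (j : ℕ),
        volume (⋃ J ∈ StopFam p p' c1 (c2 * Cw ^ (p' / p)) V j I, dCube d J)
          ≤ volume (dCube d I) / 2 ^ j := by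
  have hp0 : 0 < p := by linarith
  have hp'0 : p' ≠ 0 := by
    rintro rfl
    rw [div_zero, add_zero, div_eq_one_iff_eq hp0.ne'] at hpp'
    linarith
  have hpq : p.HolderConjugate p' := by
    rw [Real.holderConjugate_iff]
    exact ⟨hp, by simpa [one_div] using hpp'⟩
  refine ⟨4 * ((n : ℝ) ^ p * Real.sqrt n ^ p * n) + 2,
    4 * ((n : ℝ) ^ p' * Real.sqrt n ^ p' * n) + 2, ?_, ?_, ?_⟩
  · have : 0 ≤ (n : ℝ) ^ p * Real.sqrt n ^ p * n := by positivity
    linarith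
  · have : 0 ≤ (n : ℝ) ^ p' * Real.sqrt n ^ p' * n := by positivity
    linarith
  intro Wp Wm hWp hWm Cw hCw hAp hAi hBi V hV hVred I j
  refine stop_decay (fun I => ?_) j I
  have hWm' : ∀ x, (Wm x).PosDef := fun x => by rw [hWm]; exact (hWp x).inv
  refine main_step hpq (A := fun x => opM (Wp x)) (B := fun x => opM (Wm x))
    (fun x => opM_nonneg (hWp x)) (fun x => opM_nonneg (hWm' x))
    (fun x => by rw [hWm]; exact (opM_inv (hWp x)).1)
    (fun I e => hAi _ (dCube_isCube I) (WithLp.ofLp e))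
    (fun I e => hBi _ (dCube_isCube I) (WithLp.ofLp e)) hCw (fun I => ?_)
    (V := fun I => opM (V I)) (U := fun I => opM (V I)⁻¹)
    (fun I => opM_nonneg (hV I)) (fun I => opM_nonneg (hV I).inv)
    (fun I => (opM_inv (hV I)).1) (fun I e => ?_) (fun I e => ?_) rfl rfl I _
    (fun J hJ => hJ.1) (fun J hJ K hK => maxBad_disj hJ hK) (fun J hJ => ?_)
  · have h := hAp _ (dCube_isCube I)
    rw [avg_eq] at h
    simp only [avg_eq, matNorm_eq, opM_mul] at h
    exact h
  · have h := (hVred I (WithLp.ofLp e)).1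
    rw [avg_eq] at h
    exact h
  · have h := (hVred I (WithLp.ofLp e)).2
    rw [avg_eq] at h
    exact h
  · have h := hJ.2.1
    unfold Bad at h
    rw [matNorm_eq, matNorm_eq, opM_mul, opM_mul] at h
    exact h
end
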